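/- arXiv:2204.09756 — 2 statements merged into one kernel-verified Lean document; each statement's English description precedes it below -/
import Mathlib

section
/- Let A ∈ ℝ^{n×n}. Every eigenvalue of A (i.e., every root in ℂ of its characteristic polynomial) has strictly negative real part if and only if there exists a symmetric positive definite matrix P ∈ ℝ^{n×n} such that −AᵀP − PA is positive definite. -/
open Matrix

/-- A real square matrix is Hurwitz if every root in `ℂ` of its characteristic
polynomial has strictly negative real part. -/
def IsHurwitz {n : ℕ} (A : Matrix (Fin n) (Fin n) ℝ) : Prop :=
  ∀ z : ℂ, ((A.map (Complex.ofReal)).charpoly).IsRoot z → z.re < 0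

/-!
The equivalence holds in every unital C⋆-algebra. If `p` and `-a⋆p - pa` are strictly positive and
`0 ≤ re z`, then `b = p (z - a)` satisfies `b⋆ + b = 2 (re z) p + (-a⋆p - pa) > 0`, which makes `b`,
and hence `z - a`, invertible. Conversely, the Cayley transform `c = (1 + a)(1 - a)⁻¹` carries the
open left half-plane into the open unit disc, so some power `c ^ k` has norm less than `1` by
Gelfand's formula. The telescoping sum `p = ∑ j < k, (c ^ j)⋆ c ^ j` then has
`p - c⋆pc = 1 - (c ^ k)⋆ c ^ k > 0`, and conjugating by `1 - a` turns `p - c⋆pc` into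
`2 (-a⋆p - pa)`. For a real matrix the complex solution `p` is replaced by its real part.
-/

section Ring

variable {R : Type*} [Ring R]

/-- The Cayley transform `(1 + a)(1 - a)⁻¹`, which exchanges continuous-time and discrete-time
stability. It is `0` when `1 - a` is not invertible. -/
noncomputable def cayleyTransform (a : R) : R :=
  (1 + a) * Ring.inverse (1 - a)

theorem cayleyTransform_mul_one_sub {a : R} (ha : IsUnit (1 - a)) :
    cayleyTransform a * (1 - a) = 1 + a :=
  Ring.inverse_mul_cancel_right _ _ ha

theorem sub_one_div_add_one_mem_spectrum {𝕜 : Type*} [Field 𝕜] [NeZero (2 : 𝕜)] [Algebra 𝕜 R]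
    {a : R} (ha : IsUnit (1 - a)) {z : 𝕜} (hz : z ∈ spectrum 𝕜 (cayleyTransform a)) :
    (z - 1) / (z + 1) ∈ spectrum 𝕜 a := by
  have key : (algebraMap 𝕜 R z - cayleyTransform a) * (1 - a) =
      algebraMap 𝕜 R (z - 1) - algebraMap 𝕜 R (z + 1) * a := by
    rw [sub_mul, cayleyTransform_mul_one_sub ha]
    simp only [map_sub, map_add, map_one]
    noncomm_ring
  contrapose! hz
  rw [spectrum.notMem_iff] at hz ⊢
  rw [← ha.mul_right_iff, key]
  by_cases hz1 : z + 1 = 0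
  · have hne : z - 1 ≠ 0 := by
      rw [eq_neg_of_add_eq_zero_left hz1, ← neg_add', neg_ne_zero, one_add_one_eq_two]
      exact two_ne_zero
    simpa [hz1] using hne.isUnit.map (algebraMap 𝕜 R)
  · have hunit := ((Ne.isUnit hz1).map (algebraMap 𝕜 R)).mul hz
    rwa [mul_sub, ← map_mul, mul_div_cancel₀ _ hz1] at hunit

variable [StarRing R]

/-- The Lyapunov operator `p ↦ -a⋆p - pa`, with the sign for which stability of `ẋ = ax` is
strict positivity of its value at some strictly positive `p`. -/
def lyapunovOp (a p : R) : R :=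
  -star a * p - p * a

/-- The Stein operator `p ↦ p - c⋆pc`, the analogue of `lyapunovOp` for the discrete-time system
`x (k + 1) = c x k`. -/
def steinOp (c p : R) : R :=
  p - star c * p * c

theorem steinOp_sum_star_pow_mul_pow (c : R) (k : ℕ) :
    steinOp c (∑ j ∈ Finset.range k, star (c ^ j) * c ^ j) = 1 - star (c ^ k) * c ^ k := by
  have shift (j : ℕ) : star c * (star (c ^ j) * c ^ j) * c = star (c ^ (j + 1)) * c ^ (j + 1) := by
    simp only [pow_succ, star_mul, mul_assoc]
  simp only [steinOp, Finset.mul_sum, Finset.sum_mul, shift, ← Finset.sum_sub_distrib]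
  simpa using Finset.sum_range_sub' (fun j => star (c ^ j) * c ^ j) k

theorem star_one_sub_mul_steinOp_cayleyTransform_mul {a : R} (ha : IsUnit (1 - a)) (p : R) :
    star (1 - a) * steinOp (cayleyTransform a) p * (1 - a) = lyapunovOp a (p + p) := by
  set c := cayleyTransform a
  calc star (1 - a) * (p - star c * p * c) * (1 - a)
      = star (1 - a) * p * (1 - a) - star (c * (1 - a)) * p * (c * (1 - a)) := by
        rw [star_mul]
        noncomm_ring
    _ = -star a * (p + p) - (p + p) * a := by
        rw [cayleyTransform_mul_one_sub ha, star_sub, star_add, star_one]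
        noncomm_ring

theorem star_mul_algebraMap_sub_add_self [Algebra ℂ R] [StarModule ℂ R] {p : R}
    (hp : IsSelfAdjoint p) (a : R) (z : ℂ) :
    star (p * (algebraMap ℂ R z - a)) + p * (algebraMap ℂ R z - a) =
      (2 * z.re) • p + lyapunovOp a p := by
  have hz : (2 * z.re) • p = star z • p + z • p := by
    rw [← add_smul, add_comm, ← starRingEnd_apply, Complex.add_conj, Complex.coe_smul]
  rw [star_mul, hp, star_sub, ← algebraMap_star_comm, sub_mul, mul_sub, ← Algebra.smul_def,
    ← Algebra.commutes, ← Algebra.smul_def, hz, lyapunovOp]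
  noncomm_ring

end Ring

theorem norm_lt_one_of_re_sub_one_div_add_one_neg {z : ℂ} (hz : ((z - 1) / (z + 1)).re < 0) :
    ‖z‖ < 1 := by
  have hre : ((z - 1) / (z + 1)).re = (Complex.normSq z - 1) / Complex.normSq (z + 1) := by
    rw [Complex.div_re, ← add_div, Complex.normSq_apply z]
    simp only [Complex.sub_re, Complex.sub_im, Complex.add_re, Complex.add_im, Complex.one_re,
      Complex.one_im]
    ring
  have hlt : Complex.normSq z < 1 := by
    contrapose! hz
    rw [hre]
    exact div_nonneg (sub_nonneg.mpr hz) (Complex.normSq_nonneg _)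
  rwa [Complex.normSq_eq_norm_sq, sq_lt_one_iff₀ (norm_nonneg z)] at hlt

theorem exists_norm_pow_lt_one {A : Type*} [NormedRing A] [NormedAlgebra ℂ A] [CompleteSpace A]
    {a : A} (ha : ∀ z ∈ spectrum ℂ a, ‖z‖ < 1) : ∃ k ≠ 0, ‖a ^ k‖ < 1 := by
  cases subsingleton_or_nontrivial A
  · exact ⟨1, one_ne_zero, by simp [Subsingleton.elim a 0]⟩
  have hr : spectralRadius ℂ a < (1 : NNReal) := spectrum.spectralRadius_lt_of_forall_lt a ha
  have gelfand := spectrum.pow_nnnorm_pow_one_div_tendsto_nhds_spectralRadius a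
  obtain ⟨k, hk, hk0⟩ :=
    ((gelfand.eventually_lt_const hr).and (Filter.eventually_ne_atTop 0)).exists
  refine ⟨k, hk0, ?_⟩
  contrapose! hk
  exact ENNReal.one_le_rpow (by exact_mod_cast hk) (by positivity)

section CStarAlgebra

variable {A : Type*} [CStarAlgebra A] [PartialOrder A] [StarOrderedRing A]

theorem isStrictlyPositive_one_sub_star_mul_self {b : A} (hb : ‖b‖ < 1) :
    IsStrictlyPositive (1 - star b * b) := by
  have hlt : ‖star b * b‖ < 1 := by
    rw [CStarRing.norm_star_mul_self]
    exact mul_lt_one_of_nonneg_of_lt_one_left (norm_nonneg b) hb hb.le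
  have hle : star b * b ≤ 1 :=
    (CStarAlgebra.norm_le_one_iff_of_nonneg _ (star_mul_self_nonneg b)).mp hlt.le
  exact (isUnit_one_sub_of_norm_lt_one hlt).isStrictlyPositive (sub_nonneg.mpr hle)

theorem exists_isStrictlyPositive_steinOp {c : A} (hc : ∀ z ∈ spectrum ℂ c, ‖z‖ < 1) :
    ∃ p : A, IsStrictlyPositive p ∧ IsStrictlyPositive (steinOp c p) := by
  obtain ⟨k, hk0, hk⟩ := exists_norm_pow_lt_one hc
  refine ⟨∑ j ∈ Finset.range k, star (c ^ j) * c ^ j, ?_, ?_⟩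
  · obtain ⟨m, rfl⟩ := Nat.exists_eq_succ_of_ne_zero hk0
    rw [Finset.sum_range_succ', pow_zero, star_one, one_mul]
    exact .nonneg_add (Finset.sum_nonneg fun j _ => star_mul_self_nonneg _) isStrictlyPositive_one
  · rw [steinOp_sum_star_pow_mul_pow]
    exact isStrictlyPositive_one_sub_star_mul_self hk

theorem exists_isStrictlyPositive_lyapunovOp {a : A} (ha : ∀ z ∈ spectrum ℂ a, z.re < 0) :
    ∃ p : A, IsStrictlyPositive p ∧ IsStrictlyPositive (lyapunovOp a p) := by
  have hu : IsUnit (1 - a) := by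
    have h1 : (1 : ℂ) ∉ spectrum ℂ a := fun h => not_lt.mpr zero_le_one (ha 1 h)
    simpa using spectrum.notMem_iff.mp h1
  obtain ⟨p, hp, hq⟩ := exists_isStrictlyPositive_steinOp (c := cayleyTransform a) fun z hz =>
    norm_lt_one_of_re_sub_one_div_add_one_neg (ha _ (sub_one_div_add_one_mem_spectrum hu hz))
  refine ⟨p + p, hp.add_nonneg hp.nonneg, ?_⟩
  rw [← star_one_sub_mul_steinOp_cayleyTransform_mul hu]
  exact hu.isStrictlyPositive_star_left_conjugate_iff.mpr hq

theorem isStrictlyPositive_star_mul_self_of_star_add_self {b : A}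
    (hb : IsStrictlyPositive (star b + b)) : IsStrictlyPositive (star b * b) := by
  nontriviality A
  obtain ⟨r, hr, hle⟩ := (CFC.exists_pos_algebraMap_le_iff hb.isSelfAdjoint).2
    fun x hx => hb.spectrum_pos hx
  set t := r / 2
  have complete_square : star b * b = algebraMap ℝ A (t ^ 2) +
      (star (b - algebraMap ℝ A t) * (b - algebraMap ℝ A t) +
        t • (star b + b - algebraMap ℝ A r)) := by
    rw [show r = 2 * t by ring, star_sub, ← algebraMap_star_comm]
    simp only [Algebra.algebraMap_eq_smul_one, sub_mul, mul_sub, star_trivial, smul_mul_assoc,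
      mul_smul_comm, one_mul, mul_one]
    module
  rw [complete_square]
  exact (isStrictlyPositive_algebraMap (by positivity)).add_nonneg <|
    add_nonneg (star_mul_self_nonneg _) (smul_nonneg (by positivity) (sub_nonneg.mpr hle))

theorem isUnit_of_isStrictlyPositive_star_add_self {b : A}
    (hb : IsStrictlyPositive (star b + b)) : IsUnit b := by
  have hb' : IsStrictlyPositive (star (star b) + star b) := by rwa [star_star, add_comm]
  have hl : IsUnit (star b * b) := (isStrictlyPositive_star_mul_self_of_star_add_self hb).isUnit
  have hr : IsUnit (b * star b) := by
    simpa using (isStrictlyPositive_star_mul_self_of_star_add_self hb').isUnit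
  obtain ⟨u, hu⟩ := hl.exists_left_inv
  obtain ⟨v, hv⟩ := hr.exists_right_inv
  exact isUnit_iff_exists_and_exists.mpr
    ⟨⟨star b * v, by rw [← mul_assoc, hv]⟩, ⟨u * star b, by rw [mul_assoc, hu]⟩⟩

theorem re_neg_of_isStrictlyPositive_lyapunovOp {a p : A} (hp : IsStrictlyPositive p)
    (hq : IsStrictlyPositive (lyapunovOp a p)) {z : ℂ} (hz : z ∈ spectrum ℂ a) : z.re < 0 := by
  contrapose! hz
  rw [spectrum.notMem_iff, ← hp.isUnit.mul_left_iff]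
  apply isUnit_of_isStrictlyPositive_star_add_self
  rw [star_mul_algebraMap_sub_add_self hp.isSelfAdjoint]
  exact .nonneg_add (smul_nonneg (by positivity) hp.nonneg) hq

theorem forall_mem_spectrum_re_neg_iff {a : A} :
    (∀ z ∈ spectrum ℂ a, z.re < 0) ↔
      ∃ p : A, IsStrictlyPositive p ∧ IsStrictlyPositive (lyapunovOp a p) :=
  ⟨exists_isStrictlyPositive_lyapunovOp,
    fun ⟨_, hp, hq⟩ _ hz => re_neg_of_isStrictlyPositive_lyapunovOp hp hq hz⟩

end CStarAlgebra

section Matrix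

open scoped ComplexOrder

variable {n 𝕜 : Type*} [RCLike 𝕜]

theorem posDef_map_re {M : Matrix n n 𝕜} (hM : M.PosDef) : (M.map RCLike.re).PosDef := by
  refine ⟨hM.isHermitian.map _ fun x => by simp, fun x hx => ?_⟩
  have hx' : x.mapRange ((↑) : ℝ → 𝕜) RCLike.ofReal_zero ≠ 0 := by
    rwa [ne_eq, Finsupp.mapRange_eq_zero RCLike.ofReal_injective]
  have hpos := (RCLike.pos_iff.mp (hM.2 hx')).1
  rw [Finsupp.sum, Finsupp.support_mapRange_of_injective _ _ RCLike.ofReal_injective] at hpos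
  simpa [Finsupp.sum, Finsupp.support_mapRange_of_injective _ _ RCLike.ofReal_injective] using hpos

open scoped MatrixOrder in
theorem posDef_map [Finite n] {𝕜' : Type*} [RCLike 𝕜'] (f : 𝕜 →+* 𝕜')
    (hf : Function.Semiconj f star star) {M : Matrix n n 𝕜} (hM : M.PosDef) :
    (M.map f).PosDef := by
  classical
  have := Fintype.ofFinite n
  obtain ⟨B, hB, rfl⟩ := CStarAlgebra.isStrictlyPositive_iff_eq_star_mul_self.mp
    hM.isStrictlyPositive
  have hfB : (star B * B).map f = star (f.mapMatrix B) * 1 * f.mapMatrix B := by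
    rw [Matrix.map_mul, star_eq_conjTranspose, conjTranspose_map f hf, mul_one]
    rfl
  rw [hfB]
  exact (Matrix.IsUnit.posDef_star_left_conjugate_iff (hB.map f.mapMatrix)).mpr .one

variable [Fintype n] [DecidableEq n]

theorem lyapunovOp_map {R S : Type*} [Ring R] [StarRing R] [Ring S] [StarRing S] (f : R →+* S)
    (hf : Function.Semiconj f star star) (A P : Matrix n n R) :
    lyapunovOp (A.map f) (P.map f) = (lyapunovOp A P).map f := by
  simp only [lyapunovOp, star_eq_conjTranspose, Matrix.map_sub f (map_sub f), neg_mul,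
    Matrix.map_neg f (map_neg f), Matrix.map_mul, conjTranspose_map f hf]

theorem lyapunovOp_map_re (A : Matrix n n ℝ) (P : Matrix n n 𝕜) :
    lyapunovOp A (P.map RCLike.re) = (lyapunovOp (A.map (algebraMap ℝ 𝕜)) P).map RCLike.re := by
  ext i j
  simp [lyapunovOp, Matrix.mul_apply]

open scoped MatrixOrder Matrix.Norms.L2Operator in
theorem forall_isRoot_charpoly_re_neg_iff (A : Matrix n n ℂ) :
    (∀ z : ℂ, A.charpoly.IsRoot z → z.re < 0) ↔
      ∃ P : Matrix n n ℂ, P.PosDef ∧ (lyapunovOp A P).PosDef := by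
  simp only [← mem_spectrum_iff_isRoot_charpoly, ← isStrictlyPositive_iff_posDef]
  exact forall_mem_spectrum_re_neg_iff

theorem stmt4_general (A : Matrix n n ℝ) :
    (∀ z : ℂ, (A.map Complex.ofReal).charpoly.IsRoot z → z.re < 0) ↔
      ∃ P : Matrix n n ℝ, P.PosDef ∧ (-Aᵀ * P - P * A).PosDef := by
  rw [forall_isRoot_charpoly_re_neg_iff, ← Complex.coe_algebraMap,
    ← conjTranspose_eq_transpose_of_trivial]
  change _ ↔ ∃ P : Matrix n n ℝ, P.PosDef ∧ (lyapunovOp A P).PosDef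
  constructor
  · rintro ⟨P, hP, hQ⟩
    exact ⟨P.map RCLike.re, posDef_map_re hP, lyapunovOp_map_re A P ▸ posDef_map_re hQ⟩
  · rintro ⟨P, hP, hQ⟩
    have hf : Function.Semiconj (algebraMap ℝ ℂ) star star := algebraMap_star_comm
    exact ⟨P.map (algebraMap ℝ ℂ), posDef_map _ hf hP,
      lyapunovOp_map _ hf A P ▸ posDef_map _ hf hQ⟩

end Matrix

/-- Lyapunov characterization of continuous-time stability:
`A` is Hurwitz iff there is a symmetric positive definite `P` with
`−AᵀP − PA ≻ 0`. -/
theorem stmt4 {n : ℕ} (A : Matrix (Fin n) (Fin n) ℝ) :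
    IsHurwitz A ↔
      ∃ P : Matrix (Fin n) (Fin n) ℝ, P.PosDef ∧ (-Aᵀ * P - P * A).PosDef :=
  stmt4_general A
end

section
/- Let A ∈ ℝ^{n×n}, B ∈ ℝ^{n×p}, C ∈ ℝ^{m×n}. The following are equivalent: (i) there exist matrices A_c ∈ ℝ^{n×n}, B_c ∈ ℝ^{n×m}, C_c ∈ ℝ^{p×n}, D_c ∈ ℝ^{p×m} and a symmetric positive definite P ∈ ℝ^{2n×2n} such that [[P, ĀᵀP], [PĀ, P]] is positive definite, where Ā = [[A + B D_c C, B C_c], [B_c C, A_c]]; (ii) there exist symmetric positive definite X, Y ∈ ℝ^{n×n} and matrices A_n ∈ ℝ^{n×n}, B_n ∈ ℝ^{n×m}, C_n ∈ ℝ^{p×n}, D_n ∈ ℝ^{p×m} such that [[Y, I], [I, X]] is positive definite and the 4×4 block matrix [[Y, I, YAᵀ + C_nᵀBᵀ, A_nᵀ], [⋆, X, Aᵀ + CᵀD_nᵀBᵀ, AᵀX + CᵀB_nᵀ], [⋆, ⋆, Y, I], [⋆, ⋆, ⋆, X]] is positive definite. -/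
open Matrix

/-- A 4×4 block matrix assembled from its sixteen blocks. -/
def block4 {I J K L : Type*}
    (M11 : Matrix I I ℝ) (M12 : Matrix I J ℝ) (M13 : Matrix I K ℝ) (M14 : Matrix I L ℝ)
    (M21 : Matrix J I ℝ) (M22 : Matrix J J ℝ) (M23 : Matrix J K ℝ) (M24 : Matrix J L ℝ)
    (M31 : Matrix K I ℝ) (M32 : Matrix K J ℝ) (M33 : Matrix K K ℝ) (M34 : Matrix K L ℝ)
    (M41 : Matrix L I ℝ) (M42 : Matrix L J ℝ) (M43 : Matrix L K ℝ) (M44 : Matrix L L ℝ) :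
    Matrix ((I ⊕ J) ⊕ (K ⊕ L)) ((I ⊕ J) ⊕ (K ⊕ L)) ℝ :=
  Matrix.fromBlocks (Matrix.fromBlocks M11 M12 M21 M22)
    (Matrix.fromBlocks M13 M14 M23 M24)
    (Matrix.fromBlocks M31 M32 M41 M42)
    (Matrix.fromBlocks M33 M34 M43 M44)

/-! Write the Lyapunov matrix as `P = [X, N; Nᴴ, S]` and let `[Y; V]` be the first block column of
`P⁻¹`. The matrix `T = [Y, 1; V, 0]` satisfies `P T = [1, X; 0, Nᴴ]`, so the congruence by
`diag(T, T)` replaces the products of `P` with the controller matrices by expressions that are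
affine in `X`, `Y` and the transformed controller matrices, and this change of variables is
invertible as soon as `N` and `V` are. Given `P`, invertibility of `N` is obtained by an arbitrarily
small perturbation, which the strict inequality tolerates; given `X` and `Y`, the choice
`N = S = X - Y⁻¹`, `V = -Y` works. -/

open Filter Topology

section Definitions

variable {R n p m : Type*} [Ring R]

/-- The state matrix of the plant `(A, B, C)` in feedback with the controller `(Ac, Bc, Cc, Dc)`,
acting on plant state and controller state in this order. -/
def closedLoop [Fintype p] [Fintype m] (A : Matrix n n R) (B : Matrix n p R) (C : Matrix m n R)
    (Ac : Matrix n n R) (Bc : Matrix n m R) (Cc : Matrix p n R) (Dc : Matrix p m R) :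
    Matrix (n ⊕ n) (n ⊕ n) R :=
  fromBlocks (A + B * Dc * C) (B * Cc) (Bc * C) Ac

/-- The coupling matrix `[Y, 1; 1, X]`, whose positivity makes `X` and `Y` the leading blocks of
a positive definite matrix and of its inverse. -/
def couplingBlock [DecidableEq n] (X Y : Matrix n n R) : Matrix (n ⊕ n) (n ⊕ n) R :=
  fromBlocks Y 1 1 X

/-- The congruence matrix `[Y, 1; V, 0]` that linearizes the closed-loop inequality. -/
def linearizer [DecidableEq n] (Y V : Matrix n n R) : Matrix (n ⊕ n) (n ⊕ n) R :=
  fromBlocks Y 1 V 0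

variable [Fintype n]

/-- The transformed controller state matrix `Aₙ` of the change of variables. -/
def transformedState [Fintype p] [Fintype m] (A : Matrix n n R) (B : Matrix n p R)
    (C : Matrix m n R) (X Y N V : Matrix n n R)
    (Ac : Matrix n n R) (Bc : Matrix n m R) (Cc : Matrix p n R) (Dc : Matrix p m R) :
    Matrix n n R :=
  X * (A + B * Dc * C) * Y + X * B * Cc * V + N * Bc * C * Y + N * Ac * V

/-- The transformed controller input matrix `Bₙ` of the change of variables. -/
def transformedInput [Fintype p] (B : Matrix n p R) (X N : Matrix n n R)
    (Bc : Matrix n m R) (Dc : Matrix p m R) : Matrix n m R :=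
  X * B * Dc + N * Bc

/-- The transformed controller output matrix `Cₙ` of the change of variables. -/
def transformedOutput [Fintype m] (C : Matrix m n R) (Y V : Matrix n n R)
    (Cc : Matrix p n R) (Dc : Matrix p m R) : Matrix p n R :=
  Dc * C * Y + Cc * V

variable [StarRing R]

/-- The discrete-time Lyapunov block matrix `[P, Fᴴ P; P F, P]`: its positive definiteness is the
linear matrix inequality form of `P ≻ 0` and `P - Fᴴ P F ≻ 0`. -/
def lyapunovBlock (F P : Matrix n n R) : Matrix (n ⊕ n) (n ⊕ n) R :=
  fromBlocks P (Fᴴ * P) (P * F) P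

/-- The upper right block of the synthesis inequality: the congruence transform of `Fᴴ P`, for the
closed-loop matrix `F`, in terms of the transformed controller. -/
def synthesisMap [Fintype p] [Fintype m] (A : Matrix n n R) (B : Matrix n p R) (C : Matrix m n R)
    (X Y An : Matrix n n R) (Bn : Matrix n m R) (Cn : Matrix p n R) (Dn : Matrix p m R) :
    Matrix (n ⊕ n) (n ⊕ n) R :=
  fromBlocks (Y * Aᴴ + Cnᴴ * Bᴴ) Anᴴ (Aᴴ + Cᴴ * Dnᴴ * Bᴴ) (Aᴴ * X + Cᴴ * Bnᴴ)

/-- The block matrix of the synthesis inequality, in terms of the transformed controller. -/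
def synthesisBlock [Fintype p] [Fintype m] [DecidableEq n] (A : Matrix n n R) (B : Matrix n p R)
    (C : Matrix m n R) (X Y An : Matrix n n R) (Bn : Matrix n m R) (Cn : Matrix p n R)
    (Dn : Matrix p m R) : Matrix ((n ⊕ n) ⊕ (n ⊕ n)) ((n ⊕ n) ⊕ (n ⊕ n)) R :=
  fromBlocks (couplingBlock X Y) (synthesisMap A B C X Y An Bn Cn Dn)
    (synthesisMap A B C X Y An Bn Cn Dn)ᴴ (couplingBlock X Y)

/-- `IsCompletion X Y N S V` says that `[Y; V]` is the first block column of a right inverse of the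
Hermitian matrix `[X, N; Nᴴ, S]`, with invertible off-diagonal blocks `N` and `V`. It links the
pair `(X, Y)` of the synthesis inequality to a Lyapunov matrix of the closed loop. -/
structure IsCompletion [DecidableEq n] (X Y N S V : Matrix n n R) : Prop where
  isHermitian_left : X.IsHermitian
  isHermitian_right : Y.IsHermitian
  isHermitian_corner : S.IsHermitian
  isUnit_left : IsUnit N
  isUnit_right : IsUnit V
  mul_add_mul_eq_one : X * Y + N * V = 1
  mul_add_mul_eq_zero : Nᴴ * Y + S * V = 0

theorem isHermitian_lyapunovBlock (F : Matrix n n R) {P : Matrix n n R} (hP : P.IsHermitian) :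
    (lyapunovBlock F P).IsHermitian :=
  hP.fromBlocks (by rw [conjTranspose_mul, conjTranspose_conjTranspose, hP.eq]) hP

end Definitions

section Congruence

variable {R n : Type*} [Ring R] [Fintype n] [DecidableEq n]

theorem isUnit_linearizer (Y : Matrix n n R) {V : Matrix n n R} (hV : IsUnit V) :
    IsUnit (linearizer Y V) := by
  obtain ⟨V', hVV', hV'V⟩ := isUnit_iff_exists.1 hV
  refine isUnit_iff_exists.2 ⟨fromBlocks 0 V' 1 (-(Y * V')), ?_, ?_⟩ <;>
    simp [linearizer, fromBlocks_multiply, Matrix.mul_assoc, hVV', hV'V]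

theorem closedLoop_mul_linearizer {p m : Type*} [Fintype p] [Fintype m] (A : Matrix n n R)
    (B : Matrix n p R) (C : Matrix m n R) (Y V : Matrix n n R) (Ac : Matrix n n R)
    (Bc : Matrix n m R) (Cc : Matrix p n R) (Dc : Matrix p m R) :
    closedLoop A B C Ac Bc Cc Dc * linearizer Y V =
      fromBlocks (A * Y + B * transformedOutput C Y V Cc Dc) (A + B * Dc * C)
        (Bc * C * Y + Ac * V) (Bc * C) := by
  simp [closedLoop, linearizer, transformedOutput, fromBlocks_multiply, Matrix.add_mul,
    Matrix.mul_add, Matrix.mul_assoc, add_assoc]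

theorem isUnit_fromBlocks_diagonal {T : Matrix n n R} (hT : IsUnit T) :
    IsUnit (fromBlocks T 0 0 T) := by
  obtain ⟨T', hTT', hT'T⟩ := isUnit_iff_exists.1 hT
  refine isUnit_iff_exists.2 ⟨fromBlocks T' 0 0 T', ?_, ?_⟩ <;>
    simp [fromBlocks_multiply, hTT', hT'T]

theorem posDef_fromBlocks_conj_iff [StarRing R] [PartialOrder R] {T : Matrix n n R}
    (hT : IsUnit T) (M₁₁ M₁₂ M₂₁ M₂₂ : Matrix n n R) :
    (fromBlocks (Tᴴ * M₁₁ * T) (Tᴴ * M₁₂ * T) (Tᴴ * M₂₁ * T) (Tᴴ * M₂₂ * T)).PosDef ↔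
      (fromBlocks M₁₁ M₁₂ M₂₁ M₂₂).PosDef := by
  rw [← (isUnit_fromBlocks_diagonal hT).posDef_star_left_conjugate_iff
    (x := fromBlocks M₁₁ M₁₂ M₂₁ M₂₂)]
  simp [star_eq_conjTranspose, fromBlocks_conjTranspose, fromBlocks_multiply]

end Congruence

namespace IsCompletion

variable {R n p m : Type*} [Ring R] [StarRing R] [Fintype n] [DecidableEq n]
  {X Y N S V : Matrix n n R}

theorem isHermitian_fromBlocks (h : IsCompletion X Y N S V) :
    (fromBlocks X N Nᴴ S).IsHermitian :=
  h.isHermitian_left.fromBlocks rfl h.isHermitian_corner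

theorem fromBlocks_mul_linearizer (h : IsCompletion X Y N S V) :
    fromBlocks X N Nᴴ S * linearizer Y V = fromBlocks 1 X 0 Nᴴ := by
  simp [linearizer, fromBlocks_multiply, h.mul_add_mul_eq_one, h.mul_add_mul_eq_zero]

theorem linearizer_conj_fromBlocks (h : IsCompletion X Y N S V) :
    (linearizer Y V)ᴴ * fromBlocks X N Nᴴ S * linearizer Y V = couplingBlock X Y := by
  have hTP : (linearizer Y V)ᴴ * fromBlocks X N Nᴴ S = fromBlocks 1 0 X N := by
    rw [← h.isHermitian_fromBlocks.eq, ← conjTranspose_mul, h.fromBlocks_mul_linearizer]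
    simp [fromBlocks_conjTranspose, h.isHermitian_left.eq]
  rw [hTP]
  simp [linearizer, couplingBlock, fromBlocks_multiply, h.mul_add_mul_eq_one]

theorem posDef_iff [PartialOrder R] (h : IsCompletion X Y N S V) :
    (fromBlocks X N Nᴴ S).PosDef ↔ (couplingBlock X Y).PosDef := by
  rw [← h.linearizer_conj_fromBlocks, ← star_eq_conjTranspose (linearizer Y V),
    (isUnit_linearizer Y h.isUnit_right).posDef_star_left_conjugate_iff]

variable [Fintype p] [Fintype m] (A : Matrix n n R) (B : Matrix n p R) (C : Matrix m n R)

theorem linearizer_conj_closedLoop (h : IsCompletion X Y N S V) (Ac : Matrix n n R)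
    (Bc : Matrix n m R) (Cc : Matrix p n R) (Dc : Matrix p m R) :
    (linearizer Y V)ᴴ * ((closedLoop A B C Ac Bc Cc Dc)ᴴ * fromBlocks X N Nᴴ S) *
        linearizer Y V =
      synthesisMap A B C X Y (transformedState A B C X Y N V Ac Bc Cc Dc)
        (transformedInput B X N Bc Dc) (transformedOutput C Y V Cc Dc) Dc := by
  rw [← Matrix.mul_assoc, ← conjTranspose_mul, Matrix.mul_assoc, h.fromBlocks_mul_linearizer,
    closedLoop_mul_linearizer, fromBlocks_conjTranspose, fromBlocks_multiply]
  simp only [synthesisMap, transformedState, transformedInput, transformedOutput,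
    conjTranspose_add, conjTranspose_mul, h.isHermitian_left.eq, h.isHermitian_right.eq,
    Matrix.mul_one, Matrix.mul_zero, add_zero, Matrix.add_mul, Matrix.mul_add, Matrix.mul_assoc]
  congr 1 <;> abel

theorem lyapunovBlock_posDef_iff [PartialOrder R] (h : IsCompletion X Y N S V)
    (Ac : Matrix n n R) (Bc : Matrix n m R) (Cc : Matrix p n R) (Dc : Matrix p m R) :
    (lyapunovBlock (closedLoop A B C Ac Bc Cc Dc) (fromBlocks X N Nᴴ S)).PosDef ↔
      (synthesisBlock A B C X Y (transformedState A B C X Y N V Ac Bc Cc Dc)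
        (transformedInput B X N Bc Dc) (transformedOutput C Y V Cc Dc) Dc).PosDef := by
  rw [lyapunovBlock, synthesisBlock, ← h.linearizer_conj_closedLoop,
    ← h.linearizer_conj_fromBlocks,
    ← posDef_fromBlocks_conj_iff (isUnit_linearizer Y h.isUnit_right)]
  simp only [conjTranspose_mul, conjTranspose_conjTranspose, h.isHermitian_fromBlocks.eq,
    Matrix.mul_assoc]

theorem exists_controller (h : IsCompletion X Y N S V) (An : Matrix n n R) (Bn : Matrix n m R)
    (Cn : Matrix p n R) (Dc : Matrix p m R) :
    ∃ (Ac : Matrix n n R) (Bc : Matrix n m R) (Cc : Matrix p n R),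
      transformedState A B C X Y N V Ac Bc Cc Dc = An ∧
      transformedInput B X N Bc Dc = Bn ∧
      transformedOutput C Y V Cc Dc = Cn := by
  obtain ⟨N', hNN'⟩ := h.isUnit_left.exists_right_inv
  obtain ⟨V', hV'V⟩ := h.isUnit_right.exists_left_inv
  have hcancel (W : Matrix n n R) : N * (N' * W * V') * V = W := by
    rw [Matrix.mul_assoc, Matrix.mul_assoc, hV'V, Matrix.mul_one, ← Matrix.mul_assoc, hNN',
      Matrix.one_mul]
  let Cc := (Cn - Dc * C * Y) * V'
  let Bc := N' * (Bn - X * B * Dc)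
  let W := X * (A + B * Dc * C) * Y + X * B * Cc * V + N * Bc * C * Y
  refine ⟨N' * (An - W) * V', Bc, Cc, ?_, ?_, ?_⟩
  · rw [transformedState, hcancel, add_sub_cancel]
  · rw [transformedInput, ← Matrix.mul_assoc, hNN', Matrix.one_mul, add_sub_cancel]
  · rw [transformedOutput, Matrix.mul_assoc (Cn - _), hV'V, Matrix.mul_one, add_sub_cancel]

end IsCompletion

section Existence

variable {K n : Type*} [Field K] [PartialOrder K] [StarRing K] [Fintype n] [DecidableEq n]
  {X Y N S : Matrix n n K}

theorem exists_isCompletion_of_posDef (hP : (fromBlocks X N Nᴴ S).PosDef) (hN : IsUnit N) :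
    ∃ Y V, IsCompletion X Y N S V := by
  obtain ⟨Y, U, V, W, hinv⟩ : ∃ Y U V W, (fromBlocks X N Nᴴ S)⁻¹ = fromBlocks Y U V W :=
    ⟨_, _, _, _, (fromBlocks_toBlocks _).symm⟩
  have hY : Y.PosDef := (hinv ▸ hP.inv).submatrix Sum.inl_injective
  have hS : S.PosDef := hP.submatrix Sum.inr_injective
  have hmul := mul_nonsing_inv _ ((isUnit_iff_isUnit_det _).1 hP.isUnit)
  rw [hinv, fromBlocks_multiply, ← fromBlocks_one, fromBlocks_inj] at hmul
  obtain ⟨hone, -, hzero, -⟩ := hmul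
  have hV : IsUnit V := by
    have hSV : S * V = -(Nᴴ * Y) := (neg_eq_of_add_eq_zero_right hzero).symm
    rw [← hS.isUnit.mul_left_iff, hSV]
    exact (hN.star.mul hY.isUnit).neg
  exact ⟨Y, V, (hP.submatrix Sum.inl_injective).isHermitian, hY.isHermitian, hS.isHermitian, hN,
    hV, hone, hzero⟩

theorem exists_isCompletion_of_couplingBlock_posDef (hXY : (couplingBlock X Y).PosDef) :
    ∃ N S V, IsCompletion X Y N S V := by
  have hX : X.PosDef := hXY.submatrix Sum.inr_injective
  have hY : Y.PosDef := hXY.submatrix Sum.inl_injective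
  have hYY : Y⁻¹ * Y = 1 := nonsing_inv_mul Y ((isUnit_iff_isUnit_det Y).1 hY.isUnit)
  have hZ : (X - Y⁻¹).IsHermitian := hX.isHermitian.sub hY.inv.isHermitian
  have hZu : IsUnit (X - Y⁻¹) := by
    have := hY.isUnit.invertible
    simpa using isUnit_fromBlocks_iff_of_invertible₁₁.1 hXY.isUnit
  refine ⟨X - Y⁻¹, X - Y⁻¹, -Y, hX.isHermitian, hY.isHermitian, hZ, hZu, hY.isUnit.neg, ?_, ?_⟩
  · rw [Matrix.sub_mul, Matrix.mul_neg, Matrix.mul_neg, hYY]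
    abel
  · rw [hZ.eq, Matrix.mul_neg, add_neg_cancel]

end Existence

section Perturbation

theorem dense_setOf_isUnit_matrix {K n : Type*} [NontriviallyNormedField K] [Fintype n]
    [DecidableEq n] : Dense {M : Matrix n n K | IsUnit M} := by
  intro M
  have hunit : ∀ᶠ t : K in 𝓝[≠] 0, IsUnit (M + t • 1) := by
    have hroots : {t : K | (-M).charpoly.IsRoot t}.Finite :=
      Polynomial.finite_setOfPred_isRoot (charpoly_monic _).ne_zero
    filter_upwards [nhdsNE_le_cofinite 0 hroots.compl_mem_cofinite] with t ht
    rw [isUnit_iff_isUnit_det, isUnit_iff_ne_zero]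
    simpa [Polynomial.IsRoot, eval_charpoly, scalar_apply, ← smul_one_eq_diagonal, add_comm]
      using ht
  have htendsto : Tendsto (fun t : K ↦ M + t • (1 : Matrix n n K)) (𝓝[≠] 0) (𝓝 M) := by
    have hcont : Continuous fun t : K ↦ M + t • (1 : Matrix n n K) := by fun_prop
    simpa using (hcont.tendsto 0).mono_left nhdsWithin_le_nhds
  exact mem_closure_of_tendsto htendsto hunit

open scoped ComplexOrder

variable {𝕜 n : Type*} [RCLike 𝕜]

theorem posDef_of_forall_mem_sphere [Fintype n] {M : Matrix n n 𝕜} (hM : M.IsHermitian)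
    (hpos : ∀ x ∈ Metric.sphere (0 : n → 𝕜) 1, 0 < RCLike.re (star x ⬝ᵥ M *ᵥ x)) :
    M.PosDef := by
  refine .of_dotProduct_mulVec_pos hM fun x hx ↦
    RCLike.pos_iff.2 ⟨?_, hM.im_star_dotProduct_mulVec_self x⟩
  have hnorm : 0 < ‖x‖ := norm_pos_iff.2 hx
  have hinv : 0 < ‖x‖⁻¹ := inv_pos.2 hnorm
  have hscaled := hpos (((‖x‖⁻¹ : ℝ) : 𝕜) • x) (by simp [norm_smul, hnorm.ne'])
  rw [mulVec_smul, dotProduct_smul, star_smul, smul_dotProduct, smul_eq_mul, smul_eq_mul,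
    RCLike.star_def, RCLike.conj_ofReal, RCLike.re_ofReal_mul, RCLike.re_ofReal_mul] at hscaled
  exact pos_of_mul_pos_right (pos_of_mul_pos_right hscaled hinv.le) hinv.le

theorem eventually_posDef_of_isHermitian [Finite n] {M : Matrix n n 𝕜} (hM : M.PosDef) :
    ∀ᶠ M' in 𝓝 M, M'.IsHermitian → M'.PosDef := by
  have := Fintype.ofFinite n
  have hcont : Continuous fun z : Matrix n n 𝕜 × (n → 𝕜) ↦
      RCLike.re (star z.2 ⬝ᵥ z.1 *ᵥ z.2) := by fun_prop
  have hsphere : ∀ᶠ M' in 𝓝 M, ∀ x ∈ Metric.sphere (0 : n → 𝕜) 1,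
      0 < RCLike.re (star x ⬝ᵥ M' *ᵥ x) :=
    (isCompact_sphere 0 1).eventually_forall_of_forall_eventually fun x hx ↦
      hcont.continuousAt.eventually (lt_mem_nhds
        (hM.re_dotProduct_pos (Metric.ne_of_mem_sphere hx one_ne_zero)))
  filter_upwards [hsphere] with M' hpos hherm using posDef_of_forall_mem_sphere hherm hpos

theorem exists_lyapunovBlock_posDef_isUnit [Fintype n] [DecidableEq n]
    {F P : Matrix (n ⊕ n) (n ⊕ n) 𝕜} (hL : (lyapunovBlock F P).PosDef) :
    ∃ X N S, IsUnit N ∧ (lyapunovBlock F (fromBlocks X N Nᴴ S)).PosDef := by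
  have hP : P.IsHermitian := (hL.submatrix Sum.inl_injective).isHermitian
  obtain ⟨X, N₀, N₁, S, rfl⟩ : ∃ X N₀ N₁ S, P = fromBlocks X N₀ N₁ S :=
    ⟨_, _, _, _, (fromBlocks_toBlocks P).symm⟩
  obtain ⟨hX, rfl, -, hS⟩ := isHermitian_fromBlocks_iff.1 hP
  have hcont : Continuous fun N : Matrix n n 𝕜 ↦ lyapunovBlock F (fromBlocks X N Nᴴ S) := by
    unfold lyapunovBlock
    fun_prop
  have hnear : ∀ᶠ N in 𝓝 N₀, (lyapunovBlock F (fromBlocks X N Nᴴ S)).PosDef :=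
    (hcont.continuousAt.eventually (eventually_posDef_of_isHermitian hL)).mono fun N hN ↦
      hN (isHermitian_lyapunovBlock F (hX.fromBlocks rfl hS))
  obtain ⟨N, hN, hLN⟩ :=
    ((mem_closure_iff_frequently.1 (dense_setOf_isUnit_matrix N₀)).and_eventually hnear).exists
  exact ⟨X, N, S, hN, hLN⟩

end Perturbation

open scoped ComplexOrder in
theorem stmt19_general {𝕜 n p m : Type*} [RCLike 𝕜] [Fintype n] [DecidableEq n] [Fintype p]
    [Fintype m] (A : Matrix n n 𝕜) (B : Matrix n p 𝕜) (C : Matrix m n 𝕜) :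
    (∃ (Ac : Matrix n n 𝕜) (Bc : Matrix n m 𝕜) (Cc : Matrix p n 𝕜) (Dc : Matrix p m 𝕜)
       (P : Matrix (n ⊕ n) (n ⊕ n) 𝕜),
      P.PosDef ∧ (lyapunovBlock (closedLoop A B C Ac Bc Cc Dc) P).PosDef) ↔
    (∃ (X Y An : Matrix n n 𝕜) (Bn : Matrix n m 𝕜) (Cn : Matrix p n 𝕜) (Dn : Matrix p m 𝕜),
      X.PosDef ∧ Y.PosDef ∧ (couplingBlock X Y).PosDef ∧
      (synthesisBlock A B C X Y An Bn Cn Dn).PosDef) := by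
  constructor
  · rintro ⟨Ac, Bc, Cc, Dc, P, -, hL⟩
    obtain ⟨X, N, S, hN, hLN⟩ := exists_lyapunovBlock_posDef_isUnit hL
    have hPN : (fromBlocks X N Nᴴ S).PosDef := hLN.submatrix Sum.inl_injective
    obtain ⟨Y, V, h⟩ := exists_isCompletion_of_posDef hPN hN
    have hXY : (couplingBlock X Y).PosDef := h.posDef_iff.1 hPN
    exact ⟨X, Y, _, _, _, Dc, hXY.submatrix Sum.inr_injective, hXY.submatrix Sum.inl_injective,
      hXY, (h.lyapunovBlock_posDef_iff A B C Ac Bc Cc Dc).1 hLN⟩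
  · rintro ⟨X, Y, An, Bn, Cn, Dn, -, -, hXY, hL⟩
    obtain ⟨N, S, V, h⟩ := exists_isCompletion_of_couplingBlock_posDef hXY
    obtain ⟨Ac, Bc, Cc, rfl, rfl, rfl⟩ := h.exists_controller A B C An Bn Cn Dn
    exact ⟨Ac, Bc, Cc, Dn, _, h.posDef_iff.2 hXY,
      (h.lyapunovBlock_posDef_iff A B C Ac Bc Cc Dn).2 hL⟩

/-- Discrete-time dynamic output feedback stabilization: the closed-loop
discrete-time Lyapunov LMI is feasible (in the controller matrices and
`P ≻ 0`) iff the change-of-variables LMIs (in `X, Y ≻ 0` and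
`Aₙ, Bₙ, Cₙ, Dₙ`) are feasible. -/
theorem stmt19 {n p m : ℕ}
    (A : Matrix (Fin n) (Fin n) ℝ) (B : Matrix (Fin n) (Fin p) ℝ)
    (C : Matrix (Fin m) (Fin n) ℝ) :
    (∃ (Ac : Matrix (Fin n) (Fin n) ℝ) (Bc : Matrix (Fin n) (Fin m) ℝ)
       (Cc : Matrix (Fin p) (Fin n) ℝ) (Dc : Matrix (Fin p) (Fin m) ℝ)
       (P : Matrix (Fin n ⊕ Fin n) (Fin n ⊕ Fin n) ℝ),
      P.PosDef ∧
      (Matrix.fromBlocks P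
        ((Matrix.fromBlocks (A + B * Dc * C) (B * Cc) (Bc * C) Ac)ᵀ * P)
        (P * (Matrix.fromBlocks (A + B * Dc * C) (B * Cc) (Bc * C) Ac))
        P).PosDef) ↔
    (∃ (X Y : Matrix (Fin n) (Fin n) ℝ) (An : Matrix (Fin n) (Fin n) ℝ)
       (Bn : Matrix (Fin n) (Fin m) ℝ) (Cn : Matrix (Fin p) (Fin n) ℝ)
       (Dn : Matrix (Fin p) (Fin m) ℝ),
      X.PosDef ∧ Y.PosDef ∧
      (Matrix.fromBlocks Y (1 : Matrix (Fin n) (Fin n) ℝ)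
        (1 : Matrix (Fin n) (Fin n) ℝ) X).PosDef ∧
      (block4 Y (1 : Matrix (Fin n) (Fin n) ℝ) (Y * Aᵀ + Cnᵀ * Bᵀ) Anᵀ
        (1 : Matrix (Fin n) (Fin n) ℝ) X (Aᵀ + Cᵀ * Dnᵀ * Bᵀ) (Aᵀ * X + Cᵀ * Bnᵀ)
        (Y * Aᵀ + Cnᵀ * Bᵀ)ᵀ (Aᵀ + Cᵀ * Dnᵀ * Bᵀ)ᵀ Y (1 : Matrix (Fin n) (Fin n) ℝ)
        An (Aᵀ * X + Cᵀ * Bnᵀ)ᵀ (1 : Matrix (Fin n) (Fin n) ℝ) X).PosDef) := by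
  simpa only [lyapunovBlock, closedLoop, synthesisBlock, couplingBlock, synthesisMap, block4,
    conjTranspose_eq_transpose_of_trivial, fromBlocks_transpose, transpose_transpose]
    using stmt19_general A B C
end
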